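/- Fix t > 0, (x̂, â) ∈ ℝ², points (x₁,a₁),…,(x_m,a_m) ∈ ℝ², and a subset J ⊆ {1,…,m}. Let K := { f : ℝ → ℝ 1-Lipschitz : p_{x̂,â}(t) ≤ f ≤ p_{x̂,â}(0) pointwise, f(x_j) ≤ a_j for all j = 1,…,m, and f(x_j) = a_j for all j ∈ J }. If K is nonempty, then the functional f ↦ I(f ∥ p_{x̂,â}(t)) is finite on K, attains its infimum over K, and the minimizer is unique. -/

import Mathlib

open MeasureTheory

/-- The (shifted) parabola `p(t,x)`: for `t > 0`, `p(t,x) = -t/2 - x²/(2t)` when `|x| ≤ t`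
and `p(t,x) = -|x|` otherwise; also `p(0,x) = -|x|`. -/
noncomputable def parab (t x : ℝ) : ℝ :=
  if 0 < t ∧ |x| ≤ t then -t / 2 - x ^ 2 / (2 * t) else -|x|

/-- The shifted parabola `p_{x̂,â}(t,x) = p(t, x - x̂) + â`. -/
noncomputable def parabXA (xh ah t x : ℝ) : ℝ :=
  parab t (x - xh) + ah

/-- The Bernoulli entropy `H(u) = ((1+u)/2)·log(1+u) + ((1-u)/2)·log(1-u)`
(with `0 · log 0 = 0`, as `Real.log 0 = 0`). -/
noncomputable def Hber (u : ℝ) : ℝ :=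
  (1 + u) / 2 * Real.log (1 + u) + (1 - u) / 2 * Real.log (1 - u)

/-- The excess entropy `I(f ∥ p_{x̂,â}(t)) = ∫ ( H(f') - H(∂ₓ p_{x̂,â}(t,·)) )`. -/
noncomputable def excessEntropy (xh ah t : ℝ) (f : ℝ → ℝ) : ℝ :=
  ∫ y : ℝ, (Hber (deriv f y) - Hber (deriv (parabXA xh ah t) y))

/-- The admissible class `K`: 1-Lipschitz functions sandwiched between `p_{x̂,â}(t)` and
`p_{x̂,â}(0)`, lying below all the points `(x_j, a_j)`, and passing through those with `j ∈ J`. -/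
def Kset (xh ah t : ℝ) (m : ℕ) (x a : Fin m → ℝ) (J : Set (Fin m)) : Set (ℝ → ℝ) :=
  {f | LipschitzWith 1 f ∧ (∀ y, parabXA xh ah t y ≤ f y ∧ f y ≤ parabXA xh ah 0 y) ∧
    (∀ j, f (x j) ≤ a j) ∧ ∀ j ∈ J, f (x j) = a j}

/-!
On `[-1, 1]` the Bernoulli entropy `H` has second derivative `1 / (1 - u²) ≥ 1`, so it is
`1`-strongly convex, and hence so is `g ↦ ∫ H ∘ g` on the `[-1, 1]`-valued functions in
`L²[a, b]`. By strong convexity, a minimizing sequence in a closed convex set is Cauchy, so there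
is a unique minimizer. Functions that agree with a fixed Lipschitz `f₀` off `[a, b]` are recovered
from their derivatives on `[a, b]` by the affine map `g ↦ f₀ + ∫ (g - deriv f₀)`, which is
continuous from `L²[a, b]` to the topology of pointwise convergence. A pointwise closed convex
class of such functions thus corresponds to a closed convex subset of `L²[a, b]`; the admissible
class, all of whose members coincide with the parabola off `[x̂ - t, x̂ + t]`, is of this kind.
-/

open Set Filter
open scoped Topology NNReal ENNReal

section StrongConvexity

variable {E : Type*} [NormedAddCommGroup E] [NormedSpace ℝ E] {s : Set E} {φ : E → ℝ} {m : ℝ}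

theorem norm_sub_sq_le_of_strongConvexOn (hφ : StrongConvexOn s m φ) {c : ℝ}
    (hc : ∀ z ∈ s, c ≤ φ z) {x y : E} (hx : x ∈ s) (hy : y ∈ s) :
    m / 8 * ‖x - y‖ ^ 2 ≤ (φ x + φ y) / 2 - c := by
  obtain ⟨hs, hmid⟩ := hφ
  have hmid_mem := hs hx hy (a := 1 / 2) (b := 1 / 2) (by simp) (by simp) (by norm_num)
  have hmid_le := hmid hx hy (a := 1 / 2) (b := 1 / 2) (by simp) (by simp) (by norm_num)
  simp only [smul_eq_mul] at hmid_le
  linarith [hc _ hmid_mem]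

theorem cauchySeq_of_strongConvexOn (hm : 0 < m) (hφ : StrongConvexOn s m φ) {c : ℝ}
    (hc : ∀ z ∈ s, c ≤ φ z) {x : ℕ → E} (hx : ∀ n, x n ∈ s) (hanti : Antitone fun n ↦ φ (x n))
    (hlim : Tendsto (fun n ↦ φ (x n)) atTop (𝓝 c)) : CauchySeq x := by
  refine cauchySeq_of_le_tendsto_0 (fun N ↦ √(8 / m * (φ (x N) - c))) (fun n k N hn hk ↦ ?_) ?_
  · rw [dist_eq_norm]
    refine Real.le_sqrt_of_sq_le ?_
    have hnk := norm_sub_sq_le_of_strongConvexOn hφ hc (hx n) (hx k)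
    calc ‖x n - x k‖ ^ 2 = 8 / m * (m / 8 * ‖x n - x k‖ ^ 2) := by field_simp
      _ ≤ 8 / m * (φ (x N) - c) := by
        gcongr
        linarith [hanti hn, hanti hk]
  · simpa using ((hlim.sub_const c).const_mul (8 / m)).sqrt

theorem existsUnique_isMinOn_of_strongConvexOn [CompleteSpace E] (hm : 0 < m)
    (hφ : StrongConvexOn s m φ) (hlsc : LowerSemicontinuousOn φ s) (hs : IsClosed s)
    (hne : s.Nonempty) (hbdd : BddBelow (φ '' s)) : ∃! x, x ∈ s ∧ IsMinOn φ s x := by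
  obtain ⟨v, hanti, hlim, hv⟩ := exists_seq_tendsto_sInf (hne.image φ) hbdd
  choose x hx hxv using hv
  obtain rfl : (fun n ↦ φ (x n)) = v := funext hxv
  have hinf : ∀ z ∈ s, sInf (φ '' s) ≤ φ z := fun z hz ↦ csInf_le hbdd (mem_image_of_mem φ hz)
  obtain ⟨z, hz⟩ :=
    cauchySeq_tendsto_of_complete (cauchySeq_of_strongConvexOn hm hφ hinf hx hanti hlim)
  have hzs : z ∈ s := hs.mem_of_tendsto hz (.of_forall hx)
  have hz_le : φ z ≤ sInf (φ '' s) := by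
    refine le_of_forall_lt fun c hcz ↦ ?_
    obtain ⟨d, hcd, hdz⟩ := exists_between hcz
    have hd : ∀ᶠ n in atTop, d < φ (x n) :=
      (tendsto_nhdsWithin_iff.2 ⟨hz, .of_forall hx⟩).eventually (hlsc z hzs d hdz)
    exact hcd.trans_le (ge_of_tendsto hlim (hd.mono fun _ ↦ le_of_lt))
  have hzmin : IsMinOn φ s z := fun y hy ↦ hz_le.trans (hinf y hy)
  exact ⟨z, ⟨hzs, hzmin⟩,
    fun y hy ↦ (hφ.strictConvexOn hm).eq_of_isMinOn hy.2 hzmin hy.1 hzs⟩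

end StrongConvexity

section IntegralFunctional

variable {X F : Type*} [MeasurableSpace X] {μ : Measure X} [NormedAddCommGroup F]
  {S : Set F} {H : F → ℝ} {p : ℝ≥0∞}

/-- The `Lᵖ` functions with values almost everywhere in `S`, the natural domain of the integral
functional `g ↦ ∫ H ∘ g` when `H` is controlled only on `S`. -/
def lpValuedIn (p : ℝ≥0∞) (μ : Measure X) (S : Set F) : Set (Lp F p μ) :=
  {g | ∀ᵐ x ∂μ, g x ∈ S}

theorem coeFn_smul_add_smul [NormedSpace ℝ F] (a b : ℝ) (g h : Lp F p μ) :
    ⇑(a • g + b • h) =ᵐ[μ] fun x ↦ a • g x + b • h x :=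
  (Lp.coeFn_add _ _).trans ((Lp.coeFn_smul a g).add (Lp.coeFn_smul b h))

theorem convex_lpValuedIn [NormedSpace ℝ F] (hS : Convex ℝ S) : Convex ℝ (lpValuedIn p μ S) := by
  intro g hg h hh a b ha hb hab
  filter_upwards [hg, hh, coeFn_smul_add_smul a b g h] with x hgx hhx hcomb
  rw [hcomb]
  exact hS hgx hhx ha hb hab

theorem norm_sq_eq_integral_norm_sq [InnerProductSpace ℝ F] (g : Lp F 2 μ) :
    ‖g‖ ^ 2 = ∫ x, ‖g x‖ ^ 2 ∂μ := by
  simp only [← real_inner_self_eq_norm_sq, L2.inner_def]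

variable [IsFiniteMeasure μ]

theorem integrable_comp_of_ae_mem (hS : IsCompact S) (hH : Continuous H) {u : X → F}
    (hu : AEStronglyMeasurable u μ) (huS : ∀ᵐ x ∂μ, u x ∈ S) :
    Integrable (fun x ↦ H (u x)) μ := by
  obtain ⟨C, hC⟩ := hS.exists_bound_of_continuousOn hH.continuousOn
  exact .of_bound (hH.comp_aestronglyMeasurable hu) C (huS.mono fun x hx ↦ hC _ hx)

theorem bddBelow_integral_comp (hS : IsCompact S) (hH : Continuous H) :
    BddBelow ((fun g ↦ ∫ x, H (g x) ∂μ) '' lpValuedIn p μ S) := by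
  obtain ⟨C, hC⟩ := hS.exists_bound_of_continuousOn hH.continuousOn
  refine ⟨-(C * μ.real univ), forall_mem_image.2 fun g hg ↦ (abs_le.1 ?_).1⟩
  exact norm_integral_le_of_norm_le_const (Eventually.mono hg fun x hx ↦ hC _ hx)

theorem continuousOn_integral_comp [Fact (1 ≤ p)] (hS : IsCompact S) (hH : Continuous H) :
    ContinuousOn (fun g ↦ ∫ x, H (g x) ∂μ) (lpValuedIn p μ S) := by
  obtain ⟨C, hC⟩ := hS.exists_bound_of_continuousOn hH.continuousOn
  intro g _
  refine tendsto_of_seq_tendsto fun G hG ↦ tendsto_of_subseq_tendsto fun ns hns ↦ ?_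
  obtain ⟨hGg, hGS⟩ := tendsto_nhdsWithin_iff.1 (hG.comp hns)
  obtain ⟨ks, hks, hae⟩ := (tendstoInMeasure_of_tendsto_Lp hGg).exists_seq_tendsto_ae
  refine ⟨ks, tendsto_integral_filter_of_dominated_convergence (fun _ ↦ C) ?_ ?_
    (integrable_const C) (hae.mono fun x hx ↦ (hH.tendsto _).comp hx)⟩
  · exact .of_forall fun n ↦ hH.comp_aestronglyMeasurable (Lp.aestronglyMeasurable _)
  · exact (hks.tendsto_atTop.eventually hGS).mono fun n hn ↦ Eventually.mono hn fun x hx ↦ hC _ hx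

theorem convexOn_integral_comp [NormedSpace ℝ F] (hS : IsCompact S) (hH : Continuous H)
    (hconv : ConvexOn ℝ S H) :
    ConvexOn ℝ (lpValuedIn p μ S) fun g ↦ ∫ x, H (g x) ∂μ := by
  refine ⟨convex_lpValuedIn hconv.1, fun g hg h hh a b ha hb hab ↦ ?_⟩
  have hint : ∀ u ∈ lpValuedIn p μ S, Integrable (fun x ↦ H (u x)) μ := fun u hu ↦
    integrable_comp_of_ae_mem hS hH (Lp.aestronglyMeasurable u) hu
  have hle : (fun x ↦ H ((a • g + b • h : Lp F p μ) x)) ≤ᵐ[μ]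
      fun x ↦ a • H (g x) + b • H (h x) := by
    filter_upwards [hg, hh, coeFn_smul_add_smul a b g h] with x hgx hhx hcomb
    rw [hcomb]
    exact hconv.2 hgx hhx ha hb hab
  calc ∫ x, H ((a • g + b • h : Lp F p μ) x) ∂μ
      ≤ ∫ x, (a * H (g x) + b * H (h x)) ∂μ :=
        integral_mono_ae (hint _ (convex_lpValuedIn hconv.1 hg hh ha hb hab))
          (((hint g hg).const_mul a).add ((hint h hh).const_mul b)) hle
    _ = a • ∫ x, H (g x) ∂μ + b • ∫ x, H (h x) ∂μ := by
        rw [integral_add ((hint g hg).const_mul a) ((hint h hh).const_mul b)]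
        simp only [smul_eq_mul, integral_const_mul]

theorem strongConvexOn_integral_comp [InnerProductSpace ℝ F] {m : ℝ} (hS : IsCompact S)
    (hH : Continuous H) (hconv : StrongConvexOn S m H) :
    StrongConvexOn (lpValuedIn 2 μ S) m fun g ↦ ∫ x, H (g x) ∂μ := by
  rw [strongConvexOn_iff_convex] at hconv ⊢
  have hsq : Continuous fun v : F ↦ m / 2 * ‖v‖ ^ 2 := by fun_prop
  refine (convexOn_integral_comp hS (hH.sub hsq) hconv).congr fun g hg ↦ ?_
  simp only [Pi.sub_apply]
  have hg_meas := Lp.aestronglyMeasurable g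
  rw [integral_sub (integrable_comp_of_ae_mem hS hH hg_meas hg)
    (integrable_comp_of_ae_mem hS hsq hg_meas hg), integral_const_mul,
    norm_sq_eq_integral_norm_sq]

end IntegralFunctional

section Primitive

/-- The primitive `y ↦ ∫ z in (-∞, y], u z ∂μ` of an `L²` function, as a continuous linear map into
the space of functions with the topology of pointwise convergence. -/
noncomputable def lpPrimitive (μ : Measure ℝ) [IsFiniteMeasure μ] : Lp ℝ 2 μ →L[ℝ] (ℝ → ℝ) :=
  .pi fun y ↦ innerSL ℝ (indicatorConstLp 2 (measurableSet_Iic (a := y)) (measure_ne_top μ _) 1)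

theorem lpPrimitive_apply (μ : Measure ℝ) [IsFiniteMeasure μ] (u : Lp ℝ 2 μ) (y : ℝ) :
    lpPrimitive μ u y = ∫ z in Iic y, u z ∂μ :=
  L2.inner_indicatorConstLp_one measurableSet_Iic _ u

theorem memLp_deriv_of_lipschitzWith {μ : Measure ℝ} [IsFiniteMeasure μ] {C : ℝ≥0} {f : ℝ → ℝ}
    (hf : LipschitzWith C f) (p : ℝ≥0∞) : MemLp (deriv f) p μ :=
  .of_bound (measurable_deriv f).aestronglyMeasurable C
    (.of_forall fun _ ↦ norm_deriv_le_of_lipschitz hf)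

/-- The derivative of a Lipschitz function as an element of `L²(μ)`. -/
noncomputable def derivLp (μ : Measure ℝ) [IsFiniteMeasure μ] {C : ℝ≥0} {f : ℝ → ℝ}
    (hf : LipschitzWith C f) : Lp ℝ 2 μ :=
  (memLp_deriv_of_lipschitzWith hf 2).toLp (deriv f)

variable {a b : ℝ} {C C' : ℝ≥0} {f f₀ : ℝ → ℝ}

theorem derivLp_sub (hf : LipschitzWith C f) (hf₀ : LipschitzWith C' f₀) :
    derivLp (volume.restrict (Icc a b)) (hf.sub hf₀) = derivLp _ hf - derivLp _ hf₀ := by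
  rw [derivLp, derivLp, derivLp, ← MemLp.toLp_sub]
  refine MemLp.toLp_congr _ _ (ae_restrict_of_ae ?_)
  filter_upwards [hf.ae_differentiableAt_real, hf₀.ae_differentiableAt_real] with y hfy hf₀y
  exact deriv_sub hfy hf₀y

theorem ae_hasDerivAt_lpPrimitive (u : Lp ℝ 2 (volume.restrict (Icc a b))) :
    ∀ᵐ y ∂volume.restrict (Icc a b), HasDerivAt (lpPrimitive _ u) (u y) y := by
  set v : ℝ → ℝ := (Icc a b).indicator u
  have hv : Integrable v :=
    (integrable_indicator_iff measurableSet_Icc).2 ((Lp.memLp u).integrable one_le_two)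
  have hprim : lpPrimitive _ u = fun y ↦ (∫ z in Iic 0, v z) + ∫ z in 0..y, v z := by
    funext y
    rw [← intervalIntegral.integral_Iic_sub_Iic hv.integrableOn hv.integrableOn,
      add_sub_cancel, lpPrimitive_apply, Measure.restrict_restrict measurableSet_Iic,
      setIntegral_indicator measurableSet_Icc]
  rw [hprim, ae_restrict_iff' measurableSet_Icc]
  filter_upwards [LocallyIntegrable.ae_hasDerivAt_integral hv.locallyIntegrable] with y hy hyab
  simpa only [v, indicator_of_mem hyab] using (hy 0).const_add (∫ z in Iic 0, v z)

theorem lpPrimitive_derivLp_of_eqOn_zero (hf : LipschitzWith C f) (hf0 : EqOn f 0 (Icc a b)ᶜ) :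
    lpPrimitive _ (derivLp (volume.restrict (Icc a b)) hf) = f := by
  funext y
  have hderiv : ∀ z ∉ Icc a b, deriv f z = 0 := fun z hz ↦ by
    simpa using hf0.deriv isClosed_Icc.isOpen_compl hz
  obtain ⟨c, hca, hcy⟩ : ∃ c, c < a ∧ c ≤ y := ⟨min (a - 1) y, by simp, by simp⟩
  have hleft : ∀ z ≤ c, z ∉ Icc a b := fun z hz hzab ↦ (hz.trans_lt hca).not_ge hzab.1
  calc lpPrimitive _ (derivLp (volume.restrict (Icc a b)) hf) y
      = ∫ z in Iic y, deriv f z ∂(volume.restrict (Icc a b)) := by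
        rw [lpPrimitive_apply]
        exact integral_congr_ae (ae_restrict_of_ae (MemLp.coeFn_toLp _))
    _ = ∫ z in Iic y, deriv f z := by
        rw [Measure.restrict_restrict measurableSet_Iic]
        exact (setIntegral_eq_of_subset_of_forall_sdiff_eq_zero measurableSet_Iic inter_subset_left
          fun z hz ↦ hderiv z fun hzab ↦ hz.2 ⟨hz.1, hzab⟩).symm
    _ = ∫ z in c..y, deriv f z := by
        rw [intervalIntegral.integral_of_le hcy]
        exact setIntegral_eq_of_subset_of_forall_sdiff_eq_zero measurableSet_Iic Ioc_subset_Iic_self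
          fun z hz ↦ hderiv z (hleft z (not_lt.1 fun hcz ↦ hz.2 ⟨hcz, hz.1⟩))
    _ = f y := by
        rw [hf.lipschitzOnWith.absolutelyContinuousOnInterval.integral_deriv_eq_sub,
          hf0 (hleft c le_rfl), Pi.zero_apply, sub_zero]

/-- The function obtained from `f₀` by replacing its derivative on `[a, b]` with `g`, keeping its
values to the left of `a` and its increments to the right of `b`. It parametrizes the functions
agreeing with `f₀` off `[a, b]` by their derivatives on `[a, b]`. -/
noncomputable def replaceDeriv (a b : ℝ) (hf₀ : LipschitzWith C f₀)
    (g : Lp ℝ 2 (volume.restrict (Icc a b))) : ℝ → ℝ :=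
  f₀ + lpPrimitive _ (g - derivLp _ hf₀)

theorem replaceDeriv_derivLp (hf₀ : LipschitzWith C f₀) (hf : LipschitzWith C' f)
    (hff₀ : EqOn f f₀ (Icc a b)ᶜ) : replaceDeriv a b hf₀ (derivLp _ hf) = f := by
  have hsub : EqOn (f - f₀) 0 (Icc a b)ᶜ := fun y hy ↦ sub_eq_zero.2 (hff₀ hy)
  rw [replaceDeriv, ← derivLp_sub hf hf₀, lpPrimitive_derivLp_of_eqOn_zero _ hsub, add_sub_cancel]

theorem deriv_replaceDeriv (hf₀ : LipschitzWith C f₀) (g : Lp ℝ 2 (volume.restrict (Icc a b))) :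
    deriv (replaceDeriv a b hf₀ g) =ᵐ[volume.restrict (Icc a b)] g := by
  filter_upwards [ae_hasDerivAt_lpPrimitive (g - derivLp _ hf₀), Lp.coeFn_sub g (derivLp _ hf₀),
    (memLp_deriv_of_lipschitzWith hf₀ 2).coeFn_toLp, ae_restrict_of_ae hf₀.ae_differentiableAt_real]
    with y hprim hsub hf₀Lp hf₀y
  rw [replaceDeriv, (hf₀y.hasDerivAt.add hprim).deriv, hsub, Pi.sub_apply, derivLp, hf₀Lp,
    add_sub_cancel]

theorem replaceDeriv_eq_const_add (a b : ℝ) (hf₀ : LipschitzWith C f₀) :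
    replaceDeriv a b hf₀ = fun g ↦
      (f₀ - lpPrimitive (volume.restrict (Icc a b)) (derivLp _ hf₀)) + lpPrimitive _ g := by
  funext g
  rw [replaceDeriv, map_sub]
  abel

variable {K : Set (ℝ → ℝ)}

theorem isClosed_preimage_replaceDeriv (hf₀ : LipschitzWith C f₀) (hK : IsClosed K) :
    IsClosed (replaceDeriv a b hf₀ ⁻¹' K) := by
  rw [replaceDeriv_eq_const_add]
  exact hK.preimage (continuous_const.add (lpPrimitive _).continuous)

theorem convex_preimage_replaceDeriv (hf₀ : LipschitzWith C f₀) (hK : Convex ℝ K) :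
    Convex ℝ (replaceDeriv a b hf₀ ⁻¹' K) := by
  rw [replaceDeriv_eq_const_add]
  exact (hK.translate_preimage_right _).linear_preimage (lpPrimitive _).toLinearMap

theorem mem_lpValuedIn_of_lipschitzWith_replaceDeriv (hf₀ : LipschitzWith C f₀)
    {g : Lp ℝ 2 (volume.restrict (Icc a b))} (hg : LipschitzWith C' (replaceDeriv a b hf₀ g)) :
    g ∈ lpValuedIn 2 (volume.restrict (Icc a b)) (Icc (-C' : ℝ) C') := by
  filter_upwards [deriv_replaceDeriv hf₀ g] with y hy
  rw [← hy]
  exact abs_le.1 (norm_deriv_le_of_lipschitz hg)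

theorem existsUnique_isMinOn_integral_comp_deriv {H : ℝ → ℝ} {m : ℝ} (hm : 0 < m)
    (hH : Continuous H) (hconv : StrongConvexOn (Icc (-C : ℝ) C) m H)
    (hlip : ∀ f ∈ K, LipschitzWith C f) (hoff : ∀ f ∈ K, ∀ g ∈ K, EqOn f g (Icc a b)ᶜ)
    (hK : Convex ℝ K) (hclosed : IsClosed K) (hne : K.Nonempty) :
    ∃! f, f ∈ K ∧ IsMinOn (fun f ↦ ∫ y in Icc a b, H (deriv f y)) K f := by
  obtain ⟨f₀, hf₀⟩ := hne
  let R := replaceDeriv a b (hlip f₀ hf₀)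
  have hR_derivLp (f) (hf : f ∈ K) : R (derivLp _ (hlip f hf)) = f :=
    replaceDeriv_derivLp _ _ (hoff f hf f₀ hf₀)
  have hmem (f) (hf : f ∈ K) : derivLp _ (hlip f hf) ∈ R ⁻¹' K :=
    mem_preimage.2 ((hR_derivLp f hf).symm ▸ hf)
  have hR_integral (g) : ∫ y in Icc a b, H (deriv (R g) y) = ∫ y in Icc a b, H (g y) :=
    integral_congr_ae ((deriv_replaceDeriv _ g).fun_comp H)
  have hsub : R ⁻¹' K ⊆ lpValuedIn 2 (volume.restrict (Icc a b)) (Icc (-C : ℝ) C) :=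
    fun g hg ↦ mem_lpValuedIn_of_lipschitzWith_replaceDeriv _ (hlip _ hg)
  have hstrong : StrongConvexOn (R ⁻¹' K) m fun g ↦ ∫ y in Icc a b, H (g y) :=
    ⟨convex_preimage_replaceDeriv _ hK, fun u hu v hv ↦
      (strongConvexOn_integral_comp isCompact_Icc hH hconv).2 (hsub hu) (hsub hv)⟩
  obtain ⟨g, ⟨hgK, hgmin⟩, hguniq⟩ := existsUnique_isMinOn_of_strongConvexOn hm hstrong
    ((continuousOn_integral_comp isCompact_Icc hH).mono hsub).lowerSemicontinuousOn
    (isClosed_preimage_replaceDeriv _ hclosed) ⟨_, hmem f₀ hf₀⟩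
    ((bddBelow_integral_comp isCompact_Icc hH).mono (image_mono hsub))
  refine ⟨R g, ⟨hgK, isMinOn_iff.2 fun f hf ↦ ?_⟩, fun f ⟨hf, hfmin⟩ ↦ ?_⟩
  · rw [← hR_derivLp f hf, hR_integral, hR_integral]
    exact hgmin (hmem f hf)
  · rw [← hR_derivLp f hf]
    refine congrArg R (hguniq _ ⟨hmem f hf, isMinOn_iff.2 fun u hu ↦ ?_⟩)
    rw [← hR_integral, ← hR_integral, hR_derivLp f hf]
    exact hfmin hu

end Primitive

section BernoulliEntropy

theorem continuous_Hber : Continuous Hber := by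
  have h : Hber = fun u ↦ ((1 + u) * Real.log (1 + u) + (1 - u) * Real.log (1 - u)) / 2 := by
    funext u
    rw [Hber]
    ring
  rw [h]
  exact ((Real.continuous_mul_log.comp (continuous_const.add continuous_id)).add
    (Real.continuous_mul_log.comp (continuous_const.sub continuous_id))).div_const 2

theorem hasDerivAt_Hber {u : ℝ} (hu : u ∈ Ioo (-1) 1) :
    HasDerivAt Hber ((Real.log (1 + u) - Real.log (1 - u)) / 2) u := by
  have hadd : 1 + u ≠ 0 := by linarith [hu.1]
  have hsub : 1 - u ≠ 0 := by linarith [hu.2]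
  have hdadd := (hasDerivAt_id u).const_add 1
  have hdsub := (hasDerivAt_id u).const_sub 1
  refine (((hdadd.div_const 2).mul (hdadd.log hadd)).add
    ((hdsub.div_const 2).mul (hdsub.log hsub))).congr_deriv ?_
  simp only [id_eq]
  field_simp
  ring

theorem hasDerivAt_deriv_Hber {u : ℝ} (hu : u ∈ Ioo (-1) 1) :
    HasDerivAt (fun u ↦ (Real.log (1 + u) - Real.log (1 - u)) / 2) (1 / (1 - u ^ 2)) u := by
  have hadd : 1 + u ≠ 0 := by linarith [hu.1]
  have hsub : 1 - u ≠ 0 := by linarith [hu.2]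
  have hsq : 1 - u ^ 2 ≠ 0 := by
    rw [show 1 - u ^ 2 = (1 + u) * (1 - u) by ring]
    exact mul_ne_zero hadd hsub
  refine ((((hasDerivAt_id u).const_add 1).log hadd).sub
    (((hasDerivAt_id u).const_sub 1).log hsub)).div_const 2 |>.congr_deriv ?_
  simp only [id_eq]
  field_simp
  ring

theorem strongConvexOn_Hber : StrongConvexOn (Icc (-1) 1) 1 Hber := by
  simp only [strongConvexOn_iff_convex, Real.norm_eq_abs, sq_abs]
  refine convexOn_of_hasDerivWithinAt2_nonneg (convex_Icc _ _)
    (continuous_Hber.sub (by fun_prop)).continuousOn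
    (f' := fun u ↦ (Real.log (1 + u) - Real.log (1 - u)) / 2 - u)
    (f'' := fun u ↦ 1 / (1 - u ^ 2) - 1) ?_ ?_ ?_ <;> rw [interior_Icc] <;> intro u hu
  · refine ((hasDerivAt_Hber hu).sub (((hasDerivAt_id u).pow 2).const_mul (1 / 2)))
      |>.congr_deriv ?_ |>.hasDerivWithinAt
    simp
  · exact ((hasDerivAt_deriv_Hber hu).sub (hasDerivAt_id u)).hasDerivWithinAt
  · have hsq : u ^ 2 < 1 := (sq_lt_one_iff_abs_lt_one u).2 (abs_lt.2 hu)
    rw [sub_nonneg, le_div_iff₀ (by linarith)]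
    linarith [sq_nonneg u]

end BernoulliEntropy

section ExcessEntropy

variable {xh ah t : ℝ} {f : ℝ → ℝ}

theorem parabXA_eq_of_notMem_Icc {y : ℝ} (hy : y ∉ Icc (xh - t) (xh + t)) :
    parabXA xh ah t y = parabXA xh ah 0 y := by
  have habs : ¬|y - xh| ≤ t := fun h ↦
    hy ⟨by linarith [(abs_le.1 h).1], by linarith [(abs_le.1 h).2]⟩
  simp [parabXA, parab, habs]

theorem hasDerivAt_parabXA (ht : 0 < t) {y : ℝ} (hy : y ∈ Ioo (xh - t) (xh + t)) :
    HasDerivAt (parabXA xh ah t) (-(y - xh) / t) y := by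
  have hquad : parabXA xh ah t =ᶠ[𝓝 y] fun z ↦ -t / 2 - (z - xh) ^ 2 / (2 * t) + ah := by
    filter_upwards [isOpen_Ioo.mem_nhds hy] with z hz
    have habs : |z - xh| ≤ t := abs_le.2 ⟨by linarith [hz.1], by linarith [hz.2]⟩
    simp [parabXA, parab, habs, ht]
  have hderiv := (((((hasDerivAt_id y).sub_const xh).pow 2).div_const (2 * t)).const_sub
    (-t / 2)).add_const ah
  refine (hderiv.congr_of_eventuallyEq hquad).congr_deriv ?_
  simp only [id_eq]
  field_simp
  push_cast
  ring

theorem ae_abs_deriv_parabXA_le_one (ht : 0 < t) :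
    ∀ᵐ y ∂volume.restrict (Icc (xh - t) (xh + t)), |deriv (parabXA xh ah t) y| ≤ 1 := by
  rw [← restrict_Ioo_eq_restrict_Icc, ae_restrict_iff' measurableSet_Ioo]
  refine .of_forall fun y hy ↦ ?_
  rw [(hasDerivAt_parabXA ht hy).deriv, abs_div, abs_neg, abs_of_pos ht, div_le_one ht]
  exact abs_le.2 ⟨by linarith [hy.1], by linarith [hy.2]⟩

theorem integrableOn_Hber_deriv_parabXA (ht : 0 < t) :
    IntegrableOn (fun y ↦ Hber (deriv (parabXA xh ah t) y)) (Icc (xh - t) (xh + t)) :=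
  integrable_comp_of_ae_mem isCompact_Icc continuous_Hber
    (measurable_deriv _).aestronglyMeasurable
    ((ae_abs_deriv_parabXA_le_one ht).mono fun _ ↦ abs_le.1)

theorem integrableOn_Hber_deriv (hf : LipschitzWith 1 f) {a b : ℝ} :
    IntegrableOn (fun y ↦ Hber (deriv f y)) (Icc a b) :=
  integrable_comp_of_ae_mem isCompact_Icc continuous_Hber
    (measurable_deriv f).aestronglyMeasurable
    (.of_forall fun _ ↦ abs_le.1 (norm_deriv_le_of_lipschitz hf))

theorem excessEntropy_integrand_eq_zero (hoff : EqOn f (parabXA xh ah t) (Icc (xh - t) (xh + t))ᶜ)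
    {y : ℝ} (hy : y ∉ Icc (xh - t) (xh + t)) :
    Hber (deriv f y) - Hber (deriv (parabXA xh ah t) y) = 0 := by
  rw [hoff.deriv isClosed_Icc.isOpen_compl hy, sub_self]

theorem integrable_excessEntropy_integrand (ht : 0 < t) (hf : LipschitzWith 1 f)
    (hoff : EqOn f (parabXA xh ah t) (Icc (xh - t) (xh + t))ᶜ) :
    Integrable fun y ↦ Hber (deriv f y) - Hber (deriv (parabXA xh ah t) y) :=
  (integrableOn_iff_integrable_of_support_subset (Function.support_subset_iff'.2 fun _ hy ↦
    excessEntropy_integrand_eq_zero hoff hy)).1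
    ((integrableOn_Hber_deriv hf).sub (integrableOn_Hber_deriv_parabXA ht))

theorem excessEntropy_eq_setIntegral_sub (ht : 0 < t) (hf : LipschitzWith 1 f)
    (hoff : EqOn f (parabXA xh ah t) (Icc (xh - t) (xh + t))ᶜ) :
    excessEntropy xh ah t f = (∫ y in Icc (xh - t) (xh + t), Hber (deriv f y)) -
      ∫ y in Icc (xh - t) (xh + t), Hber (deriv (parabXA xh ah t) y) := by
  rw [excessEntropy, ← setIntegral_eq_integral_of_forall_compl_eq_zero fun _ hy ↦
    excessEntropy_integrand_eq_zero hoff hy]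
  exact integral_sub (integrableOn_Hber_deriv hf) (integrableOn_Hber_deriv_parabXA ht)

end ExcessEntropy

theorem convex_setOfPred_lipschitzWith {X F : Type*} [PseudoMetricSpace X]
    [SeminormedAddCommGroup F] [NormedSpace ℝ F] (C : ℝ≥0) :
    Convex ℝ {f : X → F | LipschitzWith C f} := by
  intro f hf g hg a b ha hb hab
  refine LipschitzWith.of_dist_le_mul fun y z ↦ ?_
  calc dist (a • f y + b • g y) (a • f z + b • g z)
      ≤ dist (a • f y) (a • f z) + dist (b • g y) (b • g z) := dist_add_add_le _ _ _ _
    _ = a * dist (f y) (f z) + b * dist (g y) (g z) := by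
        rw [dist_smul₀, dist_smul₀, Real.norm_of_nonneg ha, Real.norm_of_nonneg hb]
    _ ≤ a * (C * dist y z) + b * (C * dist y z) := by
        gcongr
        exacts [hf.dist_le_mul y z, hg.dist_le_mul y z]
    _ = C * dist y z := by rw [← add_mul, hab, one_mul]

section AdmissibleClass

variable {xh ah t : ℝ} {m : ℕ} {x a : Fin m → ℝ} {J : Set (Fin m)} {f : ℝ → ℝ}

theorem eqOn_parabXA_of_mem_Kset (hf : f ∈ Kset xh ah t m x a J) :
    EqOn f (parabXA xh ah t) (Icc (xh - t) (xh + t))ᶜ := fun y hy ↦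
  le_antisymm ((hf.2.1 y).2.trans_eq (parabXA_eq_of_notMem_Icc hy).symm) (hf.2.1 y).1

theorem Kset_eq_inter_preimage : Kset xh ah t m x a J =
    {f | LipschitzWith 1 f} ∩ Icc (parabXA xh ah t) (parabXA xh ah 0) ∩
      (fun f ↦ f ∘ x) ⁻¹' (Iic a ∩ J.pi fun j ↦ {a j}) := by
  ext f
  simp only [Kset, mem_ofPred_eq, mem_inter_iff, mem_Icc, mem_preimage, mem_Iic, Set.mem_pi,
    mem_singleton_iff, Pi.le_def, forall_and, Function.comp_apply, and_assoc]

theorem isClosed_Kset : IsClosed (Kset xh ah t m x a J) := by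
  rw [Kset_eq_inter_preimage]
  refine ((isClosed_setOfPred_lipschitzWith 1).inter isClosed_Icc).inter (.preimage ?_ ?_)
  · fun_prop
  · exact isClosed_Iic.inter (isClosed_set_pi fun _ _ ↦ isClosed_singleton)

theorem convex_Kset : Convex ℝ (Kset xh ah t m x a J) := by
  rw [Kset_eq_inter_preimage]
  refine ((convex_setOfPred_lipschitzWith 1).inter (convex_Icc _ _)).inter ?_
  exact ((convex_Iic a).inter (convex_pi fun j _ ↦ convex_singleton (a j))).linear_preimage
    (LinearMap.funLeft ℝ ℝ x)

end AdmissibleClass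

theorem excessEntropy_exists_unique_minimizer_general {t : ℝ} (ht : 0 < t) (xh ah : ℝ)
    {K : Set (ℝ → ℝ)} (hlip : ∀ f ∈ K, LipschitzWith 1 f)
    (hoff : ∀ f ∈ K, EqOn f (parabXA xh ah t) (Icc (xh - t) (xh + t))ᶜ)
    (hconv : Convex ℝ K) (hclosed : IsClosed K) (hne : K.Nonempty) :
    (∀ f ∈ K, Integrable (fun y ↦ Hber (deriv f y) - Hber (deriv (parabXA xh ah t) y))) ∧
    ∃! f₀ : ℝ → ℝ, f₀ ∈ K ∧ ∀ f ∈ K, excessEntropy xh ah t f₀ ≤ excessEntropy xh ah t f := by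
  refine ⟨fun f hf ↦ integrable_excessEntropy_integrand ht (hlip f hf) (hoff f hf), ?_⟩
  have hle_iff (f) (hf : f ∈ K) (g) (hg : g ∈ K) :
      excessEntropy xh ah t f ≤ excessEntropy xh ah t g ↔
        ∫ y in Icc (xh - t) (xh + t), Hber (deriv f y) ≤
          ∫ y in Icc (xh - t) (xh + t), Hber (deriv g y) := by
    rw [excessEntropy_eq_setIntegral_sub ht (hlip f hf) (hoff f hf),
      excessEntropy_eq_setIntegral_sub ht (hlip g hg) (hoff g hg), sub_le_sub_iff_right]
  refine (existsUnique_congr fun f ↦ and_congr_right fun hf ↦ ?_).1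
    (existsUnique_isMinOn_integral_comp_deriv (a := xh - t) (b := xh + t) (C := 1) one_pos
      continuous_Hber (by simpa using strongConvexOn_Hber) hlip
      (fun f hf g hg ↦ (hoff f hf).trans (hoff g hg).symm) hconv hclosed hne)
  rw [isMinOn_iff]
  exact forall₂_congr fun g hg ↦ (hle_iff f hf g hg).symm

/-- If `K` is nonempty then the excess entropy is finite on `K`, attains its infimum on `K`,
and the minimizer is unique. -/
theorem excessEntropy_exists_unique_minimizer
    (t : ℝ) (ht : 0 < t) (xh ah : ℝ) (m : ℕ) (x a : Fin m → ℝ) (J : Set (Fin m))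
    (hK : (Kset xh ah t m x a J).Nonempty) :
    (∀ f ∈ Kset xh ah t m x a J,
      Integrable (fun y => Hber (deriv f y) - Hber (deriv (parabXA xh ah t) y))) ∧
    ∃! f₀ : ℝ → ℝ, f₀ ∈ Kset xh ah t m x a J ∧
      ∀ f ∈ Kset xh ah t m x a J, excessEntropy xh ah t f₀ ≤ excessEntropy xh ah t f :=
  excessEntropy_exists_unique_minimizer_general ht xh ah (fun _ hf ↦ hf.1)
    (fun _ hf ↦ eqOn_parabXA_of_mem_Kset hf) convex_Kset isClosed_Kset hK
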